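/- Let G=(V,E) be an exchange network with n nodes and weights w_e ∈ [0,1], such that the LP relaxation of maximum weight matching admits a unique optimum, which is integral and corresponds to matching M*, with LP gap g > 0. Fix κ∈(0,1). Then for any initial condition α^0 ∈ [0,1]^{2|E|}, setting T* = 100 n⁴/(π κ(1−κ) g²) (which is O(n⁴/g²)), for every t ≥ T* the iterate α^t of the natural dynamics induces the matching M*, and (γ^t, M*) is a (6/√(π κ(1−κ) t))-NB solution. -/

import Mathlib

namespace EN

open Finset

variable {V : Type*}

/-- The nonnegative part `(x)₊ = max (x, 0)`. -/
noncomputable def pos (x : ℝ) : ℝ := max x 0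

variable [Fintype V] [DecidableEq V]

/-- The maximum of `f` over a finite set of vertices (`0` over the empty set). -/
noncomputable def fmax (s : Finset V) (f : V → ℝ) : ℝ := ⨆ k ∈ s, f k

/-- The offer from `i` to `j` given messages `α` and weights `w`:
`m_{i→j} = (w_{ij} − α_{i\j})₊ − (1/2) (w_{ij} − α_{i\j} − α_{j\i})₊`. -/
noncomputable def offer (w α : V → V → ℝ) (i j : V) : ℝ :=
  pos (w i j - α i j) - (1 / 2) * pos (w i j - α i j - α j i)

/-- The update operator `T` of the natural dynamics:
`(Tα)_{i\j} = max_{k ∈ ∂i \ j} m_{k→i}`. -/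
noncomputable def upd (G : SimpleGraph V) [DecidableRel G.Adj] (w α : V → V → ℝ)
    (i j : V) : ℝ :=
  fmax ((G.neighborFinset i).erase j) fun k => offer w α k i

/-- The earnings estimate `γ_i = max_{k ∈ ∂i} m_{k→i}`. -/
noncomputable def earn (G : SimpleGraph V) [DecidableRel G.Adj] (w α : V → V → ℝ)
    (i : V) : ℝ :=
  fmax (G.neighborFinset i) fun k => offer w α k i

/-- Exchange network weights: symmetric and positive on every edge. -/
def GoodW (G : SimpleGraph V) (w : V → V → ℝ) : Prop :=
  (∀ i j, w i j = w j i) ∧ ∀ i j, G.Adj i j → 0 < w i j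

/-- A valid message vector: nonnegative on all directed edges. -/
def ValidMsg (G : SimpleGraph V) (α : V → V → ℝ) : Prop :=
  ∀ i j, G.Adj i j → 0 ≤ α i j

/-- Fixed point of the natural-dynamics update operator. -/
def IsFixedPt (G : SimpleGraph V) [DecidableRel G.Adj] (w α : V → V → ℝ) : Prop :=
  ∀ i j, G.Adj i j → upd G w α i j = α i j

/-- `ε`-fixed point. -/
def IsEpsFixedPt (G : SimpleGraph V) [DecidableRel G.Adj] (w α : V → V → ℝ) (ε : ℝ) : Prop :=
  ∀ i j, G.Adj i j → |α i j - upd G w α i j| ≤ ε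

/-- The natural dynamics with damping factor `κ`: `α^{t+1} = (1−κ) α^t + κ T α^t`. -/
noncomputable def dyn (G : SimpleGraph V) [DecidableRel G.Adj] (w : V → V → ℝ) (κ : ℝ)
    (α0 : V → V → ℝ) : ℕ → V → V → ℝ
  | 0 => α0
  | t + 1 => fun i j =>
      (1 - κ) * dyn G w κ α0 t i j + κ * upd G w (dyn G w κ α0 t) i j

/-- Sup norm over directed edges. -/
noncomputable def msgSup (G : SimpleGraph V) [DecidableRel G.Adj] (f : V → V → ℝ) : ℝ :=
  ⨆ p : V × V, if G.Adj p.1 p.2 then |f p.1 p.2| else 0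

/-- `M` is a matching of `G`: a symmetric subrelation of adjacency pairing each node
with at most one partner. -/
structure IsMatching (G : SimpleGraph V) (M : V → V → Prop) : Prop where
  subset : ∀ i j, M i j → G.Adj i j
  symm : ∀ i j, M i j → M j i
  unique : ∀ i j k, M i j → M i k → j = k

/-- `(M, γ)` is a trade outcome. -/
def IsOutcome (G : SimpleGraph V) (w : V → V → ℝ) (M : V → V → Prop) (γ : V → ℝ) : Prop :=
  IsMatching G M ∧ (∀ i, 0 ≤ γ i) ∧ (∀ i j, M i j → γ i + γ j = w i j) ∧
    ∀ i, (∀ j, ¬M i j) → γ i = 0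

/-- Stability of an outcome. -/
def Stable (G : SimpleGraph V) (w : V → V → ℝ) (M : V → V → Prop) (γ : V → ℝ) : Prop :=
  ∀ i j, G.Adj i j → ¬M i j → w i j ≤ γ i + γ j

/-- The best alternative of `i` excluding `j`: `max_{k ∈ ∂i \ j} (w_{ik} − γ_k)₊`. -/
noncomputable def bestAlt (G : SimpleGraph V) [DecidableRel G.Adj] (w : V → V → ℝ)
    (γ : V → ℝ) (i j : V) : ℝ :=
  fmax ((G.neighborFinset i).erase j) fun k => pos (w i k - γ k)

/-- Balance of an outcome. -/
def Balanced (G : SimpleGraph V) [DecidableRel G.Adj] (w : V → V → ℝ) (M : V → V → Prop)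
    (γ : V → ℝ) : Prop :=
  ∀ i j, M i j → γ i - bestAlt G w γ i j = γ j - bestAlt G w γ j i

/-- Nash bargaining solution: a stable and balanced trade outcome. -/
def IsNBSolution (G : SimpleGraph V) [DecidableRel G.Adj] (w : V → V → ℝ)
    (M : V → V → Prop) (γ : V → ℝ) : Prop :=
  IsOutcome G w M γ ∧ Stable G w M γ ∧ Balanced G w M γ

/-- `ε`-balance. -/
def EpsBalanced (G : SimpleGraph V) [DecidableRel G.Adj] (w : V → V → ℝ)
    (M : V → V → Prop) (γ : V → ℝ) (ε : ℝ) : Prop :=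
  ∀ i j, M i j → |(γ i - bestAlt G w γ i j) - (γ j - bestAlt G w γ j i)| ≤ ε

/-- `ε`-Nash bargaining solution. -/
def IsEpsNB (G : SimpleGraph V) [DecidableRel G.Adj] (w : V → V → ℝ)
    (M : V → V → Prop) (γ : V → ℝ) (ε : ℝ) : Prop :=
  IsOutcome G w M γ ∧ Stable G w M γ ∧ EpsBalanced G w M γ ε

/-- Feasible point of the LP relaxation of maximum weight matching. -/
def LPFeasible (G : SimpleGraph V) [DecidableRel G.Adj] (x : V → V → ℝ) : Prop :=
  (∀ i j, x i j = x j i) ∧ (∀ i j, 0 ≤ x i j) ∧ (∀ i j, ¬G.Adj i j → x i j = 0) ∧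
    ∀ i, ∑ j ∈ G.neighborFinset i, x i j ≤ 1

/-- LP objective `Σ_{(i,j)∈E} w_{ij} x_{ij}` (each undirected edge counted once). -/
noncomputable def LPval (G : SimpleGraph V) [DecidableRel G.Adj] (w x : V → V → ℝ) : ℝ :=
  (1 / 2) * ∑ i, ∑ j ∈ G.neighborFinset i, w i j * x i j

/-- Optimal point of the LP relaxation of maximum weight matching. -/
def LPOptimal (G : SimpleGraph V) [DecidableRel G.Adj] (w x : V → V → ℝ) : Prop :=
  LPFeasible G x ∧ ∀ y, LPFeasible G y → LPval G w y ≤ LPval G w x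

def Integral (x : V → V → ℝ) : Prop := ∀ i j, x i j = 0 ∨ x i j = 1

def HalfIntegral (x : V → V → ℝ) : Prop := ∀ i j, x i j = 0 ∨ x i j = 1 / 2 ∨ x i j = 1

open Classical in
/-- The LP point associated to a matching. -/
noncomputable def mInd (M : V → V → Prop) (i j : V) : ℝ := if M i j then 1 else 0

/-- The state with offers `m` induces the matching `M`: every node receiving a positive
offer is matched and receives its unique best offer from its partner, and every node
with zero earnings is unmatched. -/
def Induces (G : SimpleGraph V) [DecidableRel G.Adj] (m : V → V → ℝ)
    (M : V → V → Prop) : Prop :=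
  IsMatching G M ∧
    (∀ i, (∃ k, G.Adj i k ∧ 0 < m k i) →
      ∃ j, M i j ∧ ∀ k, G.Adj i k → k ≠ j → m k i < m j i) ∧
    ∀ i, (fmax (G.neighborFinset i) fun k => m k i) = 0 → ∀ j, ¬M i j

/-- Feasibility for the dual LP. -/
def DualFeasible (G : SimpleGraph V) (w : V → V → ℝ) (y : V → ℝ) : Prop :=
  (∀ i, 0 ≤ y i) ∧ ∀ i j, G.Adj i j → w i j ≤ y i + y j

/-- Optimality for the dual LP. -/
def DualOptimal (G : SimpleGraph V) (w : V → V → ℝ) (y : V → ℝ) : Prop :=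
  DualFeasible G w y ∧ ∀ z, DualFeasible G w z → ∑ i, y i ≤ ∑ i, z i

/-- The unmatched balance property at every edge. -/
def UnmatchedBalance (G : SimpleGraph V) [DecidableRel G.Adj] (w : V → V → ℝ)
    (y : V → ℝ) : Prop :=
  ∀ i j, G.Adj i j → y i - bestAlt G w y i j = y j - bestAlt G w y j i

/-! ### Unequal division -/

/-- Valid split fractions: `r_{ij} ∈ (0,1)` with `r_{ij} + r_{ji} = 1` on every edge. -/
def GoodR (G : SimpleGraph V) (r : V → V → ℝ) : Prop :=
  ∀ i j, G.Adj i j → 0 < r i j ∧ r i j < 1 ∧ r i j + r j i = 1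

/-- The UD offer from `i` to `j`. -/
noncomputable def offerUD (w r α : V → V → ℝ) (i j : V) : ℝ :=
  pos (w i j - α i j) - r i j * pos (w i j - α i j - α j i)

/-- The UD update operator. -/
noncomputable def updUD (G : SimpleGraph V) [DecidableRel G.Adj] (w r α : V → V → ℝ)
    (i j : V) : ℝ :=
  fmax ((G.neighborFinset i).erase j) fun k => offerUD w r α k i

/-- The UD earnings estimate. -/
noncomputable def earnUD (G : SimpleGraph V) [DecidableRel G.Adj] (w r α : V → V → ℝ)
    (i : V) : ℝ :=
  fmax (G.neighborFinset i) fun k => offerUD w r α k i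

/-- Fixed point of the UD update operator. -/
def IsFixedPtUD (G : SimpleGraph V) [DecidableRel G.Adj] (w r α : V → V → ℝ) : Prop :=
  ∀ i j, G.Adj i j → updUD G w r α i j = α i j

/-- Correct division. -/
def CorrectDiv (G : SimpleGraph V) [DecidableRel G.Adj] (w r : V → V → ℝ)
    (M : V → V → Prop) (γ : V → ℝ) : Prop :=
  ∀ i j, M i j →
    (1 / r i j) * (γ i - bestAlt G w γ i j) = (1 / r j i) * (γ j - bestAlt G w γ j i)

/-- UD solution: a stable trade outcome satisfying correct division. -/
def IsUDSolution (G : SimpleGraph V) [DecidableRel G.Adj] (w r : V → V → ℝ)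
    (M : V → V → Prop) (γ : V → ℝ) : Prop :=
  IsOutcome G w M γ ∧ Stable G w M γ ∧ CorrectDiv G w r M γ

/-- Edge surplus. -/
noncomputable def surp (G : SimpleGraph V) [DecidableRel G.Adj] (w : V → V → ℝ)
    (γ : V → ℝ) (i j : V) : ℝ :=
  w i j - bestAlt G w γ i j - bestAlt G w γ j i

open Classical in
/-- The rebalanced allocation `γ^reb`. -/
noncomputable def reb (G : SimpleGraph V) [DecidableRel G.Adj] (w r : V → V → ℝ)
    (M : V → V → Prop) (γ : V → ℝ) (i : V) : ℝ :=
  if h : ∃ j, M i j then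
    bestAlt G w γ i h.choose + r i h.choose * surp G w γ i h.choose
  else 0

/-- The Edge Rebalancing iteration `γ^{t+1} = κ γ^reb(γ^t) + (1−κ) γ^t`. -/
noncomputable def rebIter (G : SimpleGraph V) [DecidableRel G.Adj] (w r : V → V → ℝ)
    (M : V → V → Prop) (κ : ℝ) (γ0 : V → ℝ) : ℕ → V → ℝ
  | 0 => γ0
  | t + 1 => fun i =>
      κ * reb G w r M (rebIter G w r M κ γ0 t) i + (1 - κ) * rebIter G w r M κ γ0 t i

/-! ### Baillon–Bruck bound -/

noncomputable def Qp (κ : ℝ) (f : ℤ → ℝ) (d : ℤ) : ℝ := (1 - κ) * f d + κ * f (d + 1)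

noncomputable def Qm (κ : ℝ) (f : ℤ → ℝ) (d : ℤ) : ℝ := (1 - κ) * f d + κ * f (d - 1)

noncomputable def v0 (d : ℤ) : ℝ := if 0 ≤ d then 1 else if d = -1 then 0 else -1

noncomputable def FF (κ : ℝ) (m n : ℕ) : ℤ → ℝ := (Qm κ)^[m] ((Qp κ)^[n] v0)

lemma Q_comm (κ : ℝ) : Function.Commute (Qm κ) (Qp κ) := by
  intro f; funext d; simp only [Qm, Qp, add_sub_cancel_right, sub_add_cancel]; ring

lemma FF_m (κ : ℝ) (m n : ℕ) : FF κ (m+1) n = Qm κ (FF κ m n) := by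
  simp only [FF, Function.iterate_succ_apply']

lemma FF_n (κ : ℝ) (m n : ℕ) : FF κ m (n+1) = Qp κ (FF κ m n) := by
  simp only [FF, Function.iterate_succ_apply']
  exact ((Q_comm κ).iterate_left m) _

lemma FF_anti (κ : ℝ) (m : ℕ) (n : ℕ) (d : ℤ) : FF κ m n d = - FF κ n m (-2 - d) := by
  induction m generalizing n d with
  | zero =>
    induction n generalizing d with
    | zero =>
      simp only [FF, Function.iterate_zero, id, v0]
      split_ifs <;> first | omega | simp
    | succ n ih =>
      rw [FF_n, FF_m, Qp, Qm, ih, ih, show (-2 - (d+1) : ℤ) = -2 - d - 1 by ring]; ring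
  | succ m ih =>
    rw [FF_n, FF_m, Qp, Qm, ih, ih, show (-2 - (d-1) : ℤ) = -2 - d + 1 by ring]; ring

lemma FF_diag (κ : ℝ) (m : ℕ) : FF κ m m (-1) = 0 := by
  have := FF_anti κ m m (-1)
  norm_num at this
  linarith

lemma FF_zero (κ : ℝ) (n : ℕ) (d : ℤ) (hd : 0 ≤ d) : FF κ 0 n d = 1 := by
  induction n generalizing d with
  | zero => simp [FF, v0, hd]
  | succ n ih => rw [FF_n, Qp, ih d hd, ih _ (by omega)]; ring

lemma int_cos (d : ℤ) : ∫ θ in (0:ℝ)..Real.pi, Real.cos (d * θ) = if d = 0 then Real.pi else 0 := by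
  split_ifs with h
  · simp [h]
  · have h' : (d : ℝ) ≠ 0 := by exact_mod_cast h
    rw [intervalIntegral.integral_comp_mul_left (fun x => Real.cos x) h']
    simp [integral_cos, Real.sin_int_mul_pi]

lemma FF_diff (κ : ℝ) (n : ℕ) (d : ℤ) : FF κ n n d - FF κ n n (d-1) =
    (1 / Real.pi) * ∫ θ in (0:ℝ)..Real.pi, (1 - 2 * (κ * (1 - κ)) * (1 - Real.cos θ)) ^ n *
      (Real.cos (d * θ) + Real.cos ((d + 1) * θ)) := by
  induction n generalizing d with
  | zero =>
    simp only [pow_zero, one_mul]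
    rw [intervalIntegral.integral_add (by apply Continuous.intervalIntegrable; fun_prop)
      (by apply Continuous.intervalIntegrable; fun_prop), int_cos]
    have := int_cos (d+1)
    push_cast at this
    rw [this]
    have hp := Real.pi_ne_zero
    simp only [FF, Function.iterate_zero, id, v0]
    split_ifs <;> first | omega | (field_simp; try norm_num)
  | succ n ih =>
    have h1 := ih d
    have h2 := ih (d-1)
    have h3 := ih (d+1)
    rw [show (d + 1 - 1 : ℤ) = d by ring] at h3
    rw [FF_m, FF_n]
    simp only [Qm, Qp, sub_add_cancel]
    have e : (1 - κ) * ((1 - κ) * FF κ n n d + κ * FF κ n n (d + 1)) +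
        κ * ((1 - κ) * FF κ n n (d - 1) + κ * FF κ n n d) -
      ((1 - κ) * ((1 - κ) * FF κ n n (d - 1) + κ * FF κ n n d) +
        κ * ((1 - κ) * FF κ n n (d - 1 - 1) + κ * FF κ n n (d - 1))) =
      ((1-κ)^2 + κ^2) * (FF κ n n d - FF κ n n (d-1)) +
      κ * (1-κ) * ((FF κ n n (d-1) - FF κ n n (d-1-1)) + (FF κ n n (d+1) - FF κ n n d)) := by ring
    rw [e, h1, h2, h3]
    have i1 : ∀ e : ℝ, IntervalIntegrable (fun θ : ℝ => (1 - 2 * (κ * (1 - κ)) * (1 - Real.cos θ)) ^ n *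
      (Real.cos (e * θ) + Real.cos ((e + 1) * θ))) MeasureTheory.volume 0 Real.pi := by
      intro e; apply Continuous.intervalIntegrable; fun_prop
    have : ∫ θ in (0:ℝ)..Real.pi, (1 - 2 * (κ * (1 - κ)) * (1 - Real.cos θ)) ^ (n+1) *
      (Real.cos (d * θ) + Real.cos ((d + 1) * θ)) = 
      ∫ θ in (0:ℝ)..Real.pi, (((1-κ)^2 + κ^2) * ((1 - 2 * (κ * (1 - κ)) * (1 - Real.cos θ)) ^ n *
      (Real.cos (d * θ) + Real.cos ((d + 1) * θ))) + κ * (1-κ) * (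
       (1 - 2 * (κ * (1 - κ)) * (1 - Real.cos θ)) ^ n *
      (Real.cos (((d-1 : ℤ):ℝ) * θ) + Real.cos ((((d-1 : ℤ):ℝ) + 1) * θ)) + 
       (1 - 2 * (κ * (1 - κ)) * (1 - Real.cos θ)) ^ n *
      (Real.cos (((d+1 : ℤ):ℝ) * θ) + Real.cos ((((d+1 : ℤ):ℝ) + 1) * θ)))) := by
      congr 1; funext θ
      push_cast
      have a1 : Real.cos ((d - 1 : ℝ) * θ) = Real.cos (d * θ) * Real.cos θ + Real.sin (d*θ) * Real.sin θ := by
        rw [sub_mul, one_mul, Real.cos_sub]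
      have a2 : Real.cos ((d + 1 : ℝ) * θ) = Real.cos (d * θ) * Real.cos θ - Real.sin (d*θ) * Real.sin θ := by
        rw [add_mul, one_mul, Real.cos_add]
      have a3 : Real.cos ((d + 1 + 1 : ℝ) * θ) = Real.cos ((d+1) * θ) * Real.cos θ - Real.sin ((d+1)*θ) * Real.sin θ := by
        rw [add_mul (d + 1 : ℝ), one_mul, Real.cos_add]
      have a4 : Real.cos ((d - 1 + 1 : ℝ) * θ) = Real.cos ((d+1) * θ) * Real.cos θ + Real.sin ((d+1)*θ) * Real.sin θ := by
        rw [show (d - 1 + 1 : ℝ) * θ = (d+1) * θ - θ by ring, Real.cos_sub]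
      rw [a1, a3, a4]
      rw [pow_succ]
      linear_combination (κ * (1 - κ)) * (1 - 2 * (κ * (1 - κ)) * (1 - Real.cos θ)) ^ n * (- a2)
    rw [this, intervalIntegral.integral_add ((i1 d).const_mul _) (((i1 _).add (i1 _)).const_mul _),
      intervalIntegral.integral_const_mul, intervalIntegral.integral_const_mul,
      intervalIntegral.integral_add (i1 _) (i1 _)]
    ring

lemma gauss_part (b : ℝ) (hb : 0 < b) : ∫ s in (0:ℝ)..1, Real.exp (-b * s^2) ≤ Real.sqrt (Real.pi / b) / 2 := by
  rw [← integral_gaussian_Ioi, intervalIntegral.integral_of_le zero_le_one]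
  apply MeasureTheory.setIntegral_mono_set
  · exact (integrable_exp_neg_mul_sq hb).integrableOn
  · exact Filter.Eventually.of_forall fun x => (Real.exp_pos _).le
  · exact (Set.Ioc_subset_Ioi_self).eventuallyLE

lemma FF_bound (κ : ℝ) (hκ : κ ∈ Set.Ioo (0 : ℝ) 1) (n : ℕ) (hn : 0 < n) :
    FF κ n n 0 ≤ 1 / Real.sqrt (Real.pi * κ * (1 - κ) * n) := by
  obtain ⟨h0, h1⟩ := hκ
  have hn' : (0:ℝ) < n := by exact_mod_cast hn
  have hp : 0 < κ * (1 - κ) := mul_pos h0 (by linarith)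
  have hp4 : κ * (1 - κ) ≤ 1/4 := by nlinarith [sq_nonneg (κ - 1/2)]
  have key := FF_diff κ n 0
  rw [show (0 - 1 : ℤ) = -1 by ring, FF_diag, sub_zero] at key
  rw [key]
  set p := κ * (1 - κ) with hpdef
  set b := 4 * p * n with hb
  have hb0 : 0 < b := by positivity
  have hpi := Real.pi_pos
  have step1 : ∫ θ in (0:ℝ)..Real.pi, (1 - 2 * p * (1 - Real.cos θ)) ^ n *
      (Real.cos ((0:ℤ) * θ) + Real.cos (((0:ℤ) + 1) * θ)) ≤
      ∫ θ in (0:ℝ)..Real.pi, 4 * (((fun s => Real.exp (-b * s^2)) ∘ (fun θ => Real.sin (θ / 2))) θ * 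
        (Real.cos (θ / 2) * (1/2))) := by
    apply intervalIntegral.integral_mono_on hpi.le
    · apply Continuous.intervalIntegrable; fun_prop
    · apply Continuous.intervalIntegrable; simp only [Function.comp_def]; fun_prop
    · intro θ hθ
      simp only [Int.cast_zero, zero_mul, Real.cos_zero, zero_add, one_mul, Function.comp]
      have hc0 : 0 ≤ Real.cos (θ/2) := Real.cos_nonneg_of_mem_Icc ⟨by linarith [hθ.1], by linarith [hθ.2]⟩
      have hc1 := Real.cos_le_one (θ/2)
      have hcos : Real.cos θ = 2 * Real.cos (θ/2)^2 - 1 := by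
        rw [← Real.cos_two_mul]; congr 1; ring
      have hs := Real.sin_sq_add_cos_sq (θ/2)
      have e1 : 1 - 2 * p * (1 - Real.cos θ) = 1 - 4 * p * Real.sin (θ/2)^2 := by
        rw [hcos]; linear_combination (4 * p) * hs
      have e2 : 0 ≤ 1 - 4 * p * Real.sin (θ/2)^2 := by
        nlinarith [sq_nonneg (Real.sin (θ/2)), sq_nonneg (Real.cos (θ/2))]
      have e3 : (1 - 4 * p * Real.sin (θ/2)^2)^n ≤ Real.exp (-b * Real.sin (θ/2)^2) := by
        have : 1 - 4 * p * Real.sin (θ/2)^2 ≤ Real.exp (-(4 * p * Real.sin (θ/2)^2)) := by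
          linarith [Real.add_one_le_exp (-(4 * p * Real.sin (θ/2)^2))]
        calc _ ≤ (Real.exp (-(4 * p * Real.sin (θ/2)^2)))^n := pow_le_pow_left₀ e2 this n
          _ = _ := by rw [← Real.exp_nat_mul]; congr 1; rw [hb]; ring
      rw [e1]
      calc (1 - 4 * p * Real.sin (θ/2)^2)^n * (1 + Real.cos θ) ≤ Real.exp (-b * Real.sin (θ/2)^2) * (1 + Real.cos θ) := by
            apply mul_le_mul_of_nonneg_right e3; linarith [Real.neg_one_le_cos θ]
        _ ≤ Real.exp (-b * Real.sin (θ/2)^2) * (2 * Real.cos (θ/2)) := by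
            apply mul_le_mul_of_nonneg_left _ (Real.exp_pos _).le
            rw [hcos]; nlinarith
        _ = _ := by ring
  have step2 : ∫ θ in (0:ℝ)..Real.pi, 4 * (((fun s => Real.exp (-b * s^2)) ∘ (fun θ => Real.sin (θ / 2))) θ * 
        (Real.cos (θ / 2) * (1/2))) = 4 * ∫ s in (0:ℝ)..1, Real.exp (-b * s^2) := by
    rw [intervalIntegral.integral_const_mul, intervalIntegral.integral_comp_mul_deriv]
    · norm_num
    · intro x _
      have := ((hasDerivAt_id x).div_const 2).sin
      simpa using this
    · fun_prop
    · fun_prop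
  have step3 := gauss_part b hb0
  rw [step2] at step1
  have e4 : Real.sqrt (Real.pi * κ * (1 - κ) * n) = Real.sqrt (Real.pi) * Real.sqrt (p * n) := by
    rw [← Real.sqrt_mul hpi.le]; congr 1; rw [hpdef]; ring
  have e5 : Real.sqrt (Real.pi / b) = Real.sqrt Real.pi / (2 * Real.sqrt (p * n)) := by
    rw [Real.sqrt_div hpi.le, hb, show 4 * p * n = 2^2 * (p * n) by ring, Real.sqrt_mul (by positivity), Real.sqrt_sq (by norm_num)]
  rw [e4]
  rw [e5] at step3
  have hsp : 0 < Real.sqrt Real.pi := Real.sqrt_pos.2 hpi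
  have hspn : 0 < Real.sqrt (p * n) := Real.sqrt_pos.2 (by positivity)
  calc _ ≤ (1 / Real.pi) * (4 * (Real.sqrt Real.pi / (2 * Real.sqrt (p * n)) / 2)) := by
        apply mul_le_mul_of_nonneg_left _ (by positivity)
        exact step1.trans (by linarith)
    _ = _ := by
        have := Real.mul_self_sqrt hpi.le
        field_simp
        nlinarith

/-! ### Basic facts on `fmax` and offers -/

lemma fmax_aux (s : Finset V) (f : V → ℝ) :
    fmax s f = ⨆ k, if k ∈ s then f k else 0 := by
  unfold fmax
  congr 1; funext k
  split_ifs with h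
  · simp [h]
  · simp [h]

lemma le_fmax {s : Finset V} {f : V → ℝ} {k : V} (hk : k ∈ s) : f k ≤ fmax s f := by
  rw [fmax_aux]
  have := le_ciSup (f := fun k => if k ∈ s then f k else 0) (Set.finite_range _).bddAbove k
  simpa [hk] using this

lemma fmax_le {s : Finset V} {f : V → ℝ} {c : ℝ} (hc : 0 ≤ c) (h : ∀ k ∈ s, f k ≤ c) :
    fmax s f ≤ c := by
  rw [fmax_aux]
  apply Real.iSup_le _ hc
  intro k; split_ifs with hk
  · exact h k hk
  · exact hc

lemma fmax_nonneg {s : Finset V} {f : V → ℝ} (h : ∀ k ∈ s, 0 ≤ f k) : 0 ≤ fmax s f := by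
  rw [fmax_aux]
  apply Real.iSup_nonneg
  intro k; split_ifs with hk
  · exact h k hk
  · exact le_rfl

lemma exists_fmax {s : Finset V} {f : V → ℝ} (h : 0 < fmax s f) : ∃ k ∈ s, f k = fmax s f := by
  by_contra hcon
  push Not at hcon
  rw [fmax_aux] at h hcon
  rcases isEmpty_or_nonempty V with hV | hV
  · rw [Real.iSup_of_isEmpty] at h; exact lt_irrefl _ h
  obtain ⟨k, hk⟩ := exists_eq_ciSup_of_finite (f := fun k => if k ∈ s then f k else 0)
  by_cases hks : k ∈ s
  · apply hcon k hks; rw [← hk]; simp [hks]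
  · rw [← hk] at h; simp [hks] at h

lemma fmax_lip {s : Finset V} {f g : V → ℝ} {c : ℝ} (hc : 0 ≤ c) (hf : ∀ k ∈ s, 0 ≤ f k)
    (hg : ∀ k ∈ s, 0 ≤ g k) (h : ∀ k ∈ s, |f k - g k| ≤ c) : |fmax s f - fmax s g| ≤ c := by
  have h1 := fmax_nonneg hf
  have h2 := fmax_nonneg hg
  have a1 : fmax s f ≤ fmax s g + c := fmax_le (by linarith) fun k hk => by
    have := (abs_le.1 (h k hk)).2
    have := le_fmax (f := g) hk
    linarith
  have a2 : fmax s g ≤ fmax s f + c := fmax_le (by linarith) fun k hk => by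
    have := (abs_le.1 (h k hk)).1
    have := le_fmax (f := f) hk
    linarith
  rw [abs_le]; constructor <;> linarith

lemma offer_nonneg {w α : V → V → ℝ} {i j : V} (h : 0 ≤ α j i) : 0 ≤ offer w α i j := by
  unfold offer pos
  rcases max_cases (w i j - α i j) 0 with h1 | h1 <;>
  rcases max_cases (w i j - α i j - α j i) 0 with h2 | h2 <;> rw [h1.1, h2.1] <;> linarith [h1.2, h2.2]

lemma offer_le {w α : V → V → ℝ} {i j : V} (h : 0 ≤ α i j) (hw : 0 ≤ w i j) : offer w α i j ≤ w i j := by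
  unfold offer pos
  rcases max_cases (w i j - α i j) 0 with h1 | h1 <;>
  rcases max_cases (w i j - α i j - α j i) 0 with h2 | h2 <;> rw [h1.1, h2.1] <;> linarith [h1.2, h2.2]

lemma offer_lip {w α α' : V → V → ℝ} {i j : V} {c : ℝ} (h1 : |α i j - α' i j| ≤ c) (h2 : |α j i - α' j i| ≤ c) :
    |offer w α i j - offer w α' i j| ≤ c := by
  unfold offer pos
  rw [abs_le] at *
  obtain ⟨a1, a2⟩ := h1
  obtain ⟨b1, b2⟩ := h2
  rcases max_cases (w i j - α i j) 0 with h1 | h1 <;>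
  rcases max_cases (w i j - α i j - α j i) 0 with h2 | h2 <;>
  rcases max_cases (w i j - α' i j) 0 with h3 | h3 <;>
  rcases max_cases (w i j - α' i j - α' j i) 0 with h4 | h4 <;>
  rw [h1.1, h2.1, h3.1, h4.1] <;> constructor <;> linarith [h1.2, h2.2, h3.2, h4.2]

section dynB
variable {G : SimpleGraph V} [DecidableRel G.Adj] {w : V → V → ℝ}

lemma upd_nonneg {α : V → V → ℝ} (hα : ∀ i j, G.Adj i j → 0 ≤ α i j) (i j : V) : 0 ≤ upd G w α i j := by
  apply fmax_nonneg
  intro k hk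
  simp at hk
  exact offer_nonneg (hα _ _ hk.2)

lemma upd_le_one {α : V → V → ℝ} (hw : GoodW G w) (hw1 : ∀ i j, G.Adj i j → w i j ≤ 1)
    (hα : ∀ i j, G.Adj i j → 0 ≤ α i j) (i j : V) : upd G w α i j ≤ 1 := by
  apply fmax_le zero_le_one
  intro k hk
  simp at hk
  exact (offer_le (hα _ _ hk.2.symm) (hw.2 _ _ hk.2.symm).le).trans (hw1 _ _ hk.2.symm)

lemma upd_lip {α α' : V → V → ℝ} {c : ℝ} (hc : 0 ≤ c) (hα : ∀ i j, G.Adj i j → 0 ≤ α i j)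
    (hα' : ∀ i j, G.Adj i j → 0 ≤ α' i j) (h : ∀ i j, G.Adj i j → |α i j - α' i j| ≤ c) (i j : V) :
    |upd G w α i j - upd G w α' i j| ≤ c := by
  apply fmax_lip hc
  · intro k hk
    simp at hk
    exact offer_nonneg (hα _ _ hk.2)
  · intro k hk
    simp at hk
    exact offer_nonneg (hα' _ _ hk.2)
  · intro k hk
    simp at hk
    exact offer_lip (h _ _ hk.2.symm) (h _ _ hk.2)

lemma dyn_mem (hw : GoodW G w) (hw1 : ∀ i j, G.Adj i j → w i j ≤ 1)
    {κ : ℝ} (hκ : κ ∈ Set.Ioo (0 : ℝ) 1)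
    {α0 : V → V → ℝ} (hα0 : ∀ i j, G.Adj i j → α0 i j ∈ Set.Icc (0 : ℝ) 1) (t : ℕ) :
    ∀ i j, G.Adj i j → dyn G w κ α0 t i j ∈ Set.Icc (0 : ℝ) 1 := by
  induction t with
  | zero => exact hα0
  | succ t ih =>
    intro i j hij
    have h1 := ih i j hij
    have hn : ∀ i j, G.Adj i j → 0 ≤ dyn G w κ α0 t i j := fun i j h => (ih i j h).1
    have h2 := upd_nonneg (w := w) hn i j
    have h3 := upd_le_one hw hw1 hn i j
    simp only [dyn]
    obtain ⟨k0, k1⟩ := hκ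
    constructor
    · have := mul_nonneg (by linarith : 0 ≤ 1 - κ) h1.1
      have := mul_nonneg k0.le h2
      linarith
    · have := mul_le_mul_of_nonneg_left h1.2 (by linarith : 0 ≤ 1 - κ)
      have := mul_le_mul_of_nonneg_left h3 k0.le
      linarith

lemma dyn_fix (hw : GoodW G w) (hw1 : ∀ i j, G.Adj i j → w i j ≤ 1)
    {κ : ℝ} (hκ : κ ∈ Set.Ioo (0 : ℝ) 1)
    {α0 : V → V → ℝ} (hα0 : ∀ i j, G.Adj i j → α0 i j ∈ Set.Icc (0 : ℝ) 1) (t : ℕ) (ht : 0 < t) :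
    IsEpsFixedPt G w (dyn G w κ α0 t) (1 / Real.sqrt (Real.pi * κ * (1 - κ) * t)) := by
  have hmem := dyn_mem hw hw1 hκ hα0
  have hn : ∀ t, ∀ i j, G.Adj i j → 0 ≤ dyn G w κ α0 t i j := fun t i j h => (hmem t i j h).1
  obtain ⟨k0, k1⟩ := id hκ
  set x := dyn G w κ α0 with hx
  have comb : ∀ a b A B : ℝ, |a| ≤ A → |b| ≤ B → |(1-κ) * a + κ * b| ≤ (1-κ) * A + κ * B := by
    intro a b A B ha hb
    calc _ ≤ |(1-κ)*a| + |κ*b| := abs_add_le _ _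
      _ = (1-κ) * |a| + κ * |b| := by rw [abs_mul, abs_mul, abs_of_pos k0, abs_of_pos (by linarith : 0 < 1-κ)]
      _ ≤ _ := by
        have := mul_le_mul_of_nonneg_left ha (by linarith : 0 ≤ 1 - κ)
        have := mul_le_mul_of_nonneg_left hb k0.le
        linarith
  have main : ∀ m, (∀ n, m ≤ n → ∀ i j, G.Adj i j → |x m i j - upd G w (x n) i j| ≤ FF κ m n 0) := by
    intro m
    induction m with
    | zero =>
      intro n _ i j hij
      rw [FF_zero _ _ _ le_rfl]
      have h1 := hmem 0 i j hij
      have h2 := upd_nonneg (w := w) (hn n) i j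
      have h3 := upd_le_one hw hw1 (hn n) i j
      rw [abs_le]; constructor <;> linarith [h1.1, h1.2]
    | succ m ih =>
      have hB : ∀ n, m ≤ n → ∀ i j, G.Adj i j → |x m i j - x n i j| ≤ FF κ m n (-1) := by
        intro n hmn
        induction n, hmn using Nat.le_induction with
        | base => intro i j _; rw [FF_diag]; simp
        | succ n hmn ihn =>
          intro i j hij
          rw [FF_n, Qp, show (-1 + 1 : ℤ) = 0 by ring]
          have e : x m i j - x (n+1) i j = (1-κ) * (x m i j - x n i j) + κ * (x m i j - upd G w (x n) i j) := by
            simp only [hx, dyn]; ring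
          rw [e]
          exact comb _ _ _ _ (ihn i j hij) (ih n hmn i j hij)
      intro n hmn i j hij
      rw [FF_m, Qm, show (0 - 1 : ℤ) = -1 by ring]
      have e : x (m+1) i j - upd G w (x n) i j = (1-κ) * (x m i j - upd G w (x n) i j)
          + κ * (upd G w (x m) i j - upd G w (x n) i j) := by
        simp only [hx, dyn]; ring
      rw [e]
      have hBn := hB n (by omega)
      refine comb _ _ _ _ (ih n (by omega) i j hij) (upd_lip ?_ (hn m) (hn n) hBn i j)
      exact (abs_nonneg _).trans (hBn i j hij)
  intro i j hij
  exact (main t t le_rfl i j hij).trans (FF_bound κ hκ t ht)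

end dynB

/-! ### Half-integral decomposition and sharpness -/

noncomputable def hs (σ : Equiv.Perm (V ⊕ V)) (i j : V) : ℝ :=
  (if σ (Sum.inl i) = Sum.inl j then 1/2 else 0) + (if σ (Sum.inl j) = Sum.inl i then 1/2 else 0)

lemma hs_half (σ : Equiv.Perm (V ⊕ V)) : HalfIntegral (hs σ) := by
  intro i j
  unfold hs
  split_ifs <;> norm_num

lemma hs_row (σ : Equiv.Perm (V ⊕ V)) (i : V) : ∑ j, hs σ i j ≤ 1 := by
  unfold hs
  rw [Finset.sum_add_distrib]
  have h1 : ∑ j, (if σ (Sum.inl i) = Sum.inl j then (1/2:ℝ) else 0) ≤ 1/2 := by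
    rcases h : σ (Sum.inl i) with a | a <;> simp
  have h2 : ∑ j, (if σ (Sum.inl j) = Sum.inl i then (1/2:ℝ) else 0) ≤ 1/2 := by
    have e : ∀ j : V, (σ (Sum.inl j) = Sum.inl i) ↔ σ.symm (Sum.inl i) = Sum.inl j := by
      intro j; rw [Equiv.symm_apply_eq, eq_comm]
    simp only [e]
    rcases h : σ.symm (Sum.inl i) with a | a <;> simp
  linarith

lemma sum_nbr (G : SimpleGraph V) [DecidableRel G.Adj] (x : V → ℝ) (i : V)
    (hx : ∀ j, ¬ G.Adj i j → x j = 0) : ∑ j ∈ G.neighborFinset i, x j = ∑ j, x j := by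
  apply Finset.sum_subset (Finset.subset_univ _)
  intro j _ hj
  simp at hj
  exact hx j hj

lemma half_decomp {G : SimpleGraph V} [DecidableRel G.Adj] {x : V → V → ℝ} (hx : LPFeasible G x) :
    ∃ c : Equiv.Perm (V ⊕ V) → ℝ, (∀ σ, 0 ≤ c σ) ∧ ∑ σ, c σ = 1 ∧
      ∀ i j, x i j = ∑ σ, c σ * hs σ i j := by
  obtain ⟨hsym, hnn, hoff, hrow⟩ := hx
  have hrow' : ∀ i, ∑ j, x i j ≤ 1 := fun i => by
    rw [← sum_nbr G (x i) i (hoff i)]; exact hrow i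
  let D : Matrix V V ℝ := Matrix.diagonal fun i => 1 - ∑ j, x i j
  let X : Matrix V V ℝ := Matrix.of x
  have hD : ∀ i j, 0 ≤ D i j := by
    intro i j
    simp only [D, Matrix.diagonal_apply]
    split_ifs
    · linarith [hrow' i]
    · exact le_rfl
  have hmem : Matrix.fromBlocks X D D X ∈ doublyStochastic ℝ (V ⊕ V) := by
    rw [mem_doublyStochastic_iff_sum]
    refine ⟨?_, ?_, ?_⟩
    · rintro (i | i) (j | j)
      · exact hnn i j
      · exact hD i j
      · exact hD i j
      · exact hnn i j
    · rintro (i | i) <;> simp [Fintype.sum_sum_type, X, D, Matrix.diagonal_apply]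
    · rintro (j | j) <;> simp [Fintype.sum_sum_type, X, D, Matrix.diagonal_apply, fun i => hsym i j]
  obtain ⟨c, c0, c1, c2⟩ := exists_eq_sum_perm_of_mem_doublyStochastic hmem
  refine ⟨c, c0, c1, ?_⟩
  have key : ∀ i j, x i j = ∑ σ, c σ * (if σ (Sum.inl i) = Sum.inl j then 1 else 0) := by
    intro i j
    have := congrFun (congrFun c2 (Sum.inl i)) (Sum.inl j)
    rw [Matrix.sum_apply] at this
    simp only [Matrix.smul_apply, Matrix.fromBlocks_apply₁₁, X, Matrix.of_apply, smul_eq_mul,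
      Equiv.Perm.permMatrix, PEquiv.toMatrix_apply, Equiv.toPEquiv_apply, Option.mem_some_iff] at this
    exact this.symm
  intro i j
  have h1 := key i j
  have h2 := key j i
  rw [hsym j i] at h2
  have : ∑ σ, c σ * hs σ i j = (1/2) * (∑ σ, c σ * (if σ (Sum.inl i) = Sum.inl j then 1 else 0)) +
    (1/2) * (∑ σ, c σ * (if σ (Sum.inl j) = Sum.inl i then 1 else 0)) := by
    rw [Finset.mul_sum, Finset.mul_sum, ← Finset.sum_add_distrib]
    apply Finset.sum_congr rfl
    intro σ _
    unfold hs
    split_ifs <;> ring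
  rw [this, ← h1, ← h2]; ring

lemma hs_feas {G : SimpleGraph V} [DecidableRel G.Adj] {x : V → V → ℝ} (hx : LPFeasible G x)
    {c : Equiv.Perm (V ⊕ V) → ℝ} (c0 : ∀ σ, 0 ≤ c σ) (hc : ∀ i j, x i j = ∑ σ, c σ * hs σ i j)
    (σ : Equiv.Perm (V ⊕ V)) (hσ : 0 < c σ) : LPFeasible G (hs σ) := by
  have hnn : ∀ σ i j, 0 ≤ hs (V := V) σ i j := by
    intro σ i j; unfold hs; split_ifs <;> norm_num
  have hoff : ∀ i j, ¬ G.Adj i j → hs σ i j = 0 := by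
    intro i j hij
    have h1 := hc i j
    rw [hx.2.2.1 i j hij] at h1
    have := (Finset.sum_eq_zero_iff_of_nonneg (fun τ _ => mul_nonneg (c0 τ) (hnn τ i j))).1 h1.symm σ (Finset.mem_univ _)
    rcases mul_eq_zero.1 this with h | h
    · exact absurd h hσ.ne'
    · exact h
  refine ⟨fun i j => by unfold hs; ring, hnn σ, hoff, fun i => ?_⟩
  rw [sum_nbr G _ i (hoff i)]
  exact hs_row σ i

lemma LPval_sum {ι : Type*} (s : Finset ι) (G : SimpleGraph V) [DecidableRel G.Adj] (w : V → V → ℝ) (c : ι → ℝ)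
    (h : ι → V → V → ℝ) : LPval G w (fun i j => ∑ σ ∈ s, c σ * h σ i j) = ∑ σ ∈ s, c σ * LPval G w (h σ) := by
  classical
  unfold LPval
  induction s using Finset.induction_on with
  | empty => simp
  | insert a s ha ih =>
    simp only [Finset.sum_insert ha, mul_add, Finset.sum_add_distrib]
    rw [ih]
    congr 1
    simp only [Finset.mul_sum]
    refine Finset.sum_congr rfl fun i _ => Finset.sum_congr rfl fun j _ => by ring

lemma sharp {G : SimpleGraph V} [DecidableRel G.Adj] {w : V → V → ℝ} {M : V → V → Prop} {g : ℝ} (hg : 0 < g)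
    (hgap : ∀ x : V → V → ℝ, LPFeasible G x → HalfIntegral x → x ≠ mInd M →
      LPval G w x + g ≤ LPval G w (mInd M)) {x : V → V → ℝ} (hx : LPFeasible G x) (a b : V) :
    LPval G w x + g * |x a b - mInd M a b| ≤ LPval G w (mInd M) := by
  obtain ⟨c, c0, c1, hc⟩ := half_decomp hx
  have e1 : LPval G w x = ∑ σ, c σ * LPval G w (hs σ) := by
    rw [← LPval_sum]; congr 1; funext i j; exact hc i j
  have e2 : |x a b - mInd M a b| ≤ ∑ σ, c σ * |hs σ a b - mInd M a b| := by
    have : x a b - mInd M a b = ∑ σ, c σ * (hs σ a b - mInd M a b) := by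
      simp only [mul_sub, Finset.sum_sub_distrib, ← Finset.sum_mul, c1, one_mul, ← hc]
    rw [this]
    refine (Finset.abs_sum_le_sum_abs _ _).trans (le_of_eq ?_)
    refine Finset.sum_congr rfl fun σ _ => ?_
    rw [abs_mul, abs_of_nonneg (c0 σ)]
  have e3 : ∀ σ, c σ * (LPval G w (hs σ) + g * |hs σ a b - mInd M a b|) ≤ c σ * LPval G w (mInd M) := by
    intro σ
    rcases (c0 σ).eq_or_lt with h | h
    · rw [← h]; simp
    apply mul_le_mul_of_nonneg_left _ h.le
    by_cases heq : hs σ = mInd M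
    · rw [heq]; simp
    have h1 := hgap _ (hs_feas hx c0 hc σ h) (hs_half σ) heq
    have h2 : |hs σ a b - mInd M a b| ≤ 1 := by
      rw [abs_le]
      unfold mInd
      rcases hs_half σ a b with h | h | h <;> rw [h] <;> split_ifs <;> norm_num
    nlinarith
  calc _ ≤ ∑ σ, c σ * LPval G w (hs σ) + g * ∑ σ, c σ * |hs σ a b - mInd M a b| := by
        rw [e1]; gcongr
    _ = ∑ σ, c σ * (LPval G w (hs σ) + g * |hs σ a b - mInd M a b|) := by
        rw [Finset.mul_sum, ← Finset.sum_add_distrib]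
        refine Finset.sum_congr rfl fun σ _ => by ring
    _ ≤ ∑ σ, c σ * LPval G w (mInd M) := Finset.sum_le_sum fun σ _ => e3 σ
    _ = _ := by rw [← Finset.sum_mul, c1, one_mul]

/-! ### Improving directions -/

structure Dir (G : SimpleGraph V) (M : V → V → Prop) (d : V → V → ℝ) : Prop where
  symm : ∀ i j, d i j = d j i
  off : ∀ i j, ¬ G.Adj i j → d i j = 0
  nonneg : ∀ i j, ¬ M i j → 0 ≤ d i j
  nonpos : ∀ i j, M i j → d i j ≤ 0

lemma Dir.add {G : SimpleGraph V} {M : V → V → Prop} {d e : V → V → ℝ} (hd : Dir G M d) (he : Dir G M e) :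
    Dir G M (d + e) where
  symm i j := by simp only [Pi.add_apply, hd.symm i j, he.symm i j]
  off i j h := by simp only [Pi.add_apply, hd.off i j h, he.off i j h, add_zero]
  nonneg i j h := add_nonneg (hd.nonneg i j h) (he.nonneg i j h)
  nonpos i j h := add_nonpos (hd.nonpos i j h) (he.nonpos i j h)

lemma Dir.zero {G : SimpleGraph V} {M : V → V → Prop} : Dir G M 0 :=
  ⟨fun _ _ => rfl, fun _ _ _ => rfl, fun _ _ _ => le_rfl, fun _ _ _ => le_rfl⟩

noncomputable def EE (i j a b : V) : ℝ := if (a = i ∧ b = j) ∨ (a = j ∧ b = i) then 1 else 0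

lemma EE_nonneg (i j a b : V) : 0 ≤ EE i j a b := by unfold EE; split_ifs <;> norm_num

lemma EE_self (i j : V) : EE i j i j = 1 := by simp [EE]

lemma EE_row {i j : V} (hij : i ≠ j) (a : V) :
    ∑ b, EE i j a b = (if a = i then 1 else 0) + (if a = j then 1 else 0) := by
  unfold EE
  by_cases h1 : a = i
  · subst h1; simp [hij]
  · by_cases h2 : a = j
    · subst h2; simp [h1]
    · simp [h1, h2]

section dirs
variable {G : SimpleGraph V} [DecidableRel G.Adj] {w : V → V → ℝ} {M : V → V → Prop}

lemma LPval_add (d e : V → V → ℝ) : LPval G w (d + e) = LPval G w d + LPval G w e := by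
  unfold LPval
  simp only [Pi.add_apply, mul_add, Finset.sum_add_distrib]

lemma LPval_neg (d : V → V → ℝ) : LPval G w (-d) = - LPval G w d := by
  unfold LPval
  simp only [Pi.neg_apply, mul_neg, Finset.sum_neg_distrib]

lemma LPval_smul (c : ℝ) (d : V → V → ℝ) : LPval G w (c • d) = c * LPval G w d := by
  unfold LPval
  simp only [Pi.smul_apply, smul_eq_mul, Finset.mul_sum]
  refine Finset.sum_congr rfl fun i _ => Finset.sum_congr rfl fun j _ => by ring

lemma LPval_zero : LPval G w 0 = 0 := by simp [LPval]

lemma LPval_EE (hw : GoodW G w) {i j : V} (hij : G.Adj i j) : LPval G w (EE i j) = w i j := by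
  unfold LPval
  have hne : i ≠ j := hij.ne
  have : ∀ a, ∑ b ∈ G.neighborFinset a, w a b * EE i j a b =
      w i j * ((if a = i then 1 else 0) + (if a = j then 1 else 0)) := by
    intro a
    rw [← EE_row hne a, Finset.mul_sum, sum_nbr]
    · refine Finset.sum_congr rfl fun b _ => ?_
      unfold EE
      split_ifs with h
      · rcases h with ⟨rfl, rfl⟩ | ⟨rfl, rfl⟩
        · rfl
        · rw [hw.1]
      · simp
    · intro b hb
      unfold EE
      rw [if_neg, mul_zero]
      rintro (⟨rfl, rfl⟩ | ⟨rfl, rfl⟩)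
      · exact hb hij
      · exact hb hij.symm
  rw [Finset.sum_congr rfl fun a _ => this a, ← Finset.mul_sum, Finset.sum_add_distrib]
  simp
  ring

lemma Dir_EE (hM : IsMatching G M) {i j : V} (hij : G.Adj i j) (hn : ¬ M i j) : Dir G M (EE i j) where
  symm a b := by unfold EE; congr 1; apply propext; tauto
  off a b h := by
    unfold EE
    rw [if_neg]
    rintro (⟨rfl, rfl⟩ | ⟨rfl, rfl⟩)
    · exact h hij
    · exact h hij.symm
  nonneg a b _ := EE_nonneg _ _ _ _
  nonpos a b h := by
    unfold EE
    rw [if_neg]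
    rintro (⟨rfl, rfl⟩ | ⟨rfl, rfl⟩)
    · exact hn h
    · exact hn (hM.symm _ _ h)

lemma Dir_negEE (hM : IsMatching G M) {i j : V} (hij : M i j) : Dir G M (-EE i j) where
  symm a b := by simp only [Pi.neg_apply]; unfold EE; congr 2; apply propext; tauto
  off a b h := by
    simp only [Pi.neg_apply]
    unfold EE
    rw [if_neg, neg_zero]
    rintro (⟨rfl, rfl⟩ | ⟨rfl, rfl⟩)
    · exact h (hM.subset _ _ hij)
    · exact h (hM.subset _ _ hij).symm
  nonneg a b h := by
    simp only [Pi.neg_apply]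
    unfold EE
    rw [if_neg, neg_zero]
    rintro (⟨rfl, rfl⟩ | ⟨rfl, rfl⟩)
    · exact h hij
    · exact h (hM.symm _ _ hij)
  nonpos a b _ := by
    simp only [Pi.neg_apply]
    linarith [EE_nonneg i j a b]

lemma mInd_row (hM : IsMatching G M) (i : V) : ∑ j, mInd M i j ≤ 1 := by
  classical
  by_cases h : ∃ j, M i j
  · obtain ⟨j, hj⟩ := h
    rw [Finset.sum_eq_single j]
    · unfold mInd; split_ifs <;> norm_num
    · intro b _ hb
      unfold mInd; rw [if_neg]; intro h; exact hb (hM.unique _ _ _ h hj)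
    · simp
  · push Not at h
    rw [Finset.sum_eq_zero]
    · norm_num
    · intro j _; unfold mInd; rw [if_neg (h j)]

lemma dir_bound (hM : IsMatching G M) {g : ℝ} (hg : 0 < g)
    (hgap : ∀ x : V → V → ℝ, LPFeasible G x → HalfIntegral x → x ≠ mInd M →
      LPval G w x + g ≤ LPval G w (mInd M)) {d : V → V → ℝ} (hd : Dir G M d)
    (hrow : ∀ i, (∃ j, M i j) → ∑ j, d i j ≤ 0) (a b : V) :
    LPval G w d + g * |d a b| ≤ 0 := by
  set S := ∑ i, ∑ j, |d i j| with hS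
  have hSnn : 0 ≤ S := Finset.sum_nonneg fun i _ => Finset.sum_nonneg fun j _ => abs_nonneg _
  have hSi : ∀ i, ∑ j, |d i j| ≤ S := fun i =>
    Finset.single_le_sum (f := fun i => ∑ j, |d i j|) (fun i _ => Finset.sum_nonneg fun j _ => abs_nonneg _) (Finset.mem_univ i)
  have hSij : ∀ i j, |d i j| ≤ S := fun i j =>
    (Finset.single_le_sum (f := fun j => |d i j|) (fun i _ => abs_nonneg _) (Finset.mem_univ j)).trans (hSi i)
  set δ := 1 / (1 + S) with hδ
  have hδ0 : 0 < δ := by positivity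
  have hδS : δ * S ≤ 1 := by
    rw [hδ, div_mul_eq_mul_div, one_mul, div_le_one (by positivity)]; linarith
  have hoff : ∀ i j, ¬ G.Adj i j → (mInd M + δ • d) i j = 0 := by
    intro i j h
    simp only [Pi.add_apply, Pi.smul_apply, smul_eq_mul, hd.off i j h]
    unfold mInd
    rw [if_neg (fun h' => h (hM.subset _ _ h'))]; simp
  have hx : LPFeasible G (mInd M + δ • d) := by
    refine ⟨?_, ?_, hoff, ?_⟩
    · intro i j
      simp only [Pi.add_apply, Pi.smul_apply, hd.symm i j]
      unfold mInd
      congr 2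
      exact propext ⟨hM.symm _ _, hM.symm _ _⟩
    · intro i j
      simp only [Pi.add_apply, Pi.smul_apply, smul_eq_mul]
      unfold mInd
      split_ifs with h
      · have h1 := (abs_le.1 (hSij i j)).1
        nlinarith
      · have := mul_nonneg hδ0.le (hd.nonneg i j h)
        linarith
    · intro i
      rw [sum_nbr G _ i (hoff i)]
      simp only [Pi.add_apply, Pi.smul_apply, smul_eq_mul, Finset.sum_add_distrib, ← Finset.mul_sum]
      by_cases h : ∃ j, M i j
      · have h1 := mInd_row hM i
        have h2 := hrow i h
        nlinarith
      · push Not at h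
        have h1 : ∑ j, mInd M i j = 0 := Finset.sum_eq_zero fun j _ => by unfold mInd; rw [if_neg (h j)]
        have h2 : ∑ j, d i j ≤ S := (Finset.sum_le_sum fun j _ => le_abs_self _).trans (hSi i)
        nlinarith
  have h := sharp hg hgap hx a b
  rw [LPval_add, LPval_smul] at h
  simp only [Pi.add_apply, Pi.smul_apply, smul_eq_mul, add_sub_cancel_left, abs_mul, abs_of_pos hδ0] at h
  have : δ * (LPval G w d + g * |d a b|) ≤ 0 := by linarith
  by_contra hc
  push Not at hc
  linarith [mul_pos hδ0 hc]

end dirs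

/-! ### Local analysis of approximate fixed points -/

section loc
variable {G : SimpleGraph V} [DecidableRel G.Adj] {w : V → V → ℝ} {M : V → V → Prop}
  {α : V → V → ℝ} {ε : ℝ}

lemma offer_cases (hw : GoodW G w) (hα : ValidMsg G α) {i j : V} (hij : G.Adj i j) :
    (α i j + α j i ≤ w i j ∧ offer w α j i = α i j + (w i j - α i j - α j i) / 2 ∧
      offer w α i j = α j i + (w i j - α i j - α j i) / 2) ∨
    (w i j < α i j + α j i ∧ offer w α j i = max (w i j - α j i) 0 ∧
      offer w α i j = max (w i j - α i j) 0) := by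
  have h1 := hα i j hij
  have h2 := hα j i hij.symm
  have h3 := hw.1 j i
  unfold offer pos
  rw [h3]
  rcases le_or_gt (α i j + α j i) (w i j) with h | h
  · left
    rw [max_eq_left (by linarith : 0 ≤ w i j - α j i), max_eq_left (by linarith : 0 ≤ w i j - α i j),
      max_eq_left (by linarith : 0 ≤ w i j - α j i - α i j), max_eq_left (by linarith : 0 ≤ w i j - α i j - α j i)]
    refine ⟨h, by ring, by ring⟩
  · right
    rw [max_eq_right (by linarith : w i j - α j i - α i j ≤ 0), max_eq_right (by linarith : w i j - α i j - α j i ≤ 0)]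
    refine ⟨h, by ring, by ring⟩

lemma earn_nonneg (hα : ValidMsg G α) (i : V) : 0 ≤ earn G w α i := by
  apply fmax_nonneg
  intro k hk
  simp at hk
  exact offer_nonneg (hα _ _ hk)

lemma offer_le_earn {i j : V} (hij : G.Adj i j) : offer w α j i ≤ earn G w α i :=
  le_fmax (f := fun k => offer w α k i) (by simpa using hij)

lemma offer_le_upd {i j k : V} (hij : G.Adj i k) (h : k ≠ j) : offer w α k i ≤ upd G w α i j :=
  le_fmax (f := fun k => offer w α k i) (by simpa using ⟨h, hij⟩)

lemma upd_le_earn (hα : ValidMsg G α) (i j : V) : upd G w α i j ≤ earn G w α i := by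
  apply fmax_le (earn_nonneg hα i)
  intro k hk
  simp at hk
  exact offer_le_earn hk.2

lemma earn_le (hα : ValidMsg G α) (i j : V) : earn G w α i ≤ max (upd G w α i j) (offer w α j i) := by
  apply fmax_le (le_max_of_le_left (upd_nonneg hα i j))
  intro k hk
  simp at hk
  by_cases h : k = j
  · subst h; exact le_max_right _ _
  · exact le_max_of_le_left (offer_le_upd hk h)

lemma L1 (hw : GoodW G w) (hα : ValidMsg G α) (hfix : IsEpsFixedPt G w α ε) {i j : V} (hij : G.Adj i j)
    (hε : 0 < ε) :
    w i j - 2 * ε ≤ earn G w α i + earn G w α j := by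
  have a1 := (abs_le.1 (hfix i j hij))
  have a2 := (abs_le.1 (hfix j i hij.symm))
  have b1 := upd_le_earn (w := w) hα i j
  have b2 := upd_le_earn (w := w) hα j i
  have c1 := offer_le_earn (w := w) (α := α) hij
  have c2 := offer_le_earn (w := w) (α := α) hij.symm
  rcases offer_cases hw hα hij with ⟨h, h1, h2⟩ | ⟨h, h1, h2⟩
  · linarith
  · linarith [a1.2, a2.2]

lemma L2 (hw : GoodW G w) (hα : ValidMsg G α) (hfix : IsEpsFixedPt G w α ε) {i j : V} (hij : G.Adj i j)
    (hε : 0 < ε) (hpos : 0 < offer w α j i) :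
    earn G w α j ≤ w i j - offer w α j i + ε := by
  have a2 := (abs_le.1 (hfix j i hij.symm)).1
  have e := earn_le (w := w) hα j i
  have := hα j i hij.symm
  refine e.trans (max_le ?_ ?_)
  · rcases offer_cases hw hα hij with ⟨h, h1, h2⟩ | ⟨h, h1, h2⟩
    · linarith
    · rcases max_cases (w i j - α j i) 0 with h3 | h3 <;> linarith [h3.1, h3.2]
  · rcases offer_cases hw hα hij with ⟨h, h1, h2⟩ | ⟨h, h1, h2⟩
    · linarith
    · rcases max_cases (w i j - α j i) 0 with h3 | h3 <;> rcases max_cases (w i j - α i j) 0 with h4 | h4 <;>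
       linarith [h3.1, h3.2, h4.1, h4.2]

lemma L3 (hw : GoodW G w) (hα : ValidMsg G α) (hfix : IsEpsFixedPt G w α ε) {i j : V} (hij : G.Adj i j)
    (hε : 0 < ε) (hpos : 0 < offer w α j i) :
    earn G w α j - offer w α i j ≤ earn G w α i - offer w α j i + 2 * ε := by
  have a1 := (abs_le.1 (hfix i j hij)).2
  have b1 := upd_le_earn (w := w) hα i j
  have c1 := offer_le_earn (w := w) (α := α) hij
  have e := L2 hw hα hfix hij hε hpos
  rcases offer_cases hw hα hij with ⟨h, h1, h2⟩ | ⟨h, h1, h2⟩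
  · linarith
  · rcases max_cases (w i j - α i j) 0 with h4 | h4 <;> linarith [h4.1, h4.2]

lemma L4 (hw : GoodW G w) (hα : ValidMsg G α) (hfix : IsEpsFixedPt G w α ε) {i j : V} (hij : G.Adj i j)
    (hε : 0 < ε) :
    earn G w α j - upd G w α j i ≤ earn G w α i - upd G w α i j + 2 * ε := by
  have a1 := (abs_le.1 (hfix i j hij))
  have a2 := (abs_le.1 (hfix j i hij.symm))
  have b1 := upd_le_earn (w := w) hα i j
  have c1 := offer_le_earn (w := w) (α := α) hij
  have e := earn_le (w := w) hα j i
  have := hα j i hij.symm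
  have e' : max (upd G w α j i) (offer w α i j) ≤ upd G w α j i + (earn G w α i - upd G w α i j) + 2 * ε := by
    refine max_le (by linarith) ?_
    rcases offer_cases hw hα hij with ⟨h, h1, h2⟩ | ⟨h, h1, h2⟩
    · linarith [a1.1, a1.2, a2.1, a2.2]
    · rcases max_cases (w i j - α i j) 0 with h4 | h4 <;> linarith [h4.1, h4.2, a1.1, a1.2, a2.1, a2.2]
  linarith

/-- deficit -/
noncomputable def dfc (G : SimpleGraph V) [DecidableRel G.Adj] (w α : V → V → ℝ) (v p : V) : ℝ :=
  earn G w α v - upd G w α v p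

/-- crossing a non-matching edge and then a matching edge -/
lemma dfc_cross (hw : GoodW G w) (hα : ValidMsg G α) (hfix : IsEpsFixedPt G w α ε) (hM : IsMatching G M)
    (hε : 0 < ε) {v k k' : V} (hvk : G.Adj k v) (hn : ¬ M k v) (hk : M k k') :
    dfc G w α k' k ≤ earn G w α k - offer w α v k + 2 * ε := by
  have h1 := L4 hw hα hfix (hM.subset _ _ hk) hε
  have h2 := offer_le_upd (w := w) (α := α) (j := k') hvk (by rintro rfl; exact hn hk)
  unfold dfc
  linarith

open Classical in
noncomputable def prt (M : V → V → Prop) (v : V) : V := if h : ∃ u, M v u then h.choose else v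

lemma prt_spec {v : V} (h : ∃ u, M v u) : M v (prt M v) := by
  unfold prt; rw [dif_pos h]; exact h.choose_spec

open Classical in
noncomputable def kf (G : SimpleGraph V) [DecidableRel G.Adj] (w α : V → V → ℝ) (M : V → V → Prop) (v : V) : V :=
  if h : ∃ k ∈ (G.neighborFinset v).erase (prt M v), offer w α k v = upd G w α v (prt M v) then h.choose else v

lemma kf_spec (v : V) (h : 0 < upd G w α v (prt M v)) :
    kf G w α M v ≠ prt M v ∧ G.Adj v (kf G w α M v) ∧ offer w α (kf G w α M v) v = upd G w α v (prt M v) := by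
  have h' : ∃ k ∈ (G.neighborFinset v).erase (prt M v), offer w α k v = upd G w α v (prt M v) := exists_fmax h
  unfold kf
  rw [dif_pos h']
  have := h'.choose_spec
  rw [Finset.mem_erase, SimpleGraph.mem_neighborFinset] at this
  exact ⟨this.1.1, this.1.2, this.2⟩

noncomputable def nx (G : SimpleGraph V) [DecidableRel G.Adj] (w α : V → V → ℝ) (M : V → V → Prop) (v : V) : V :=
  prt M (kf G w α M v)

def alive (G : SimpleGraph V) [DecidableRel G.Adj] (w α : V → V → ℝ) (M : V → V → Prop) (v : V) : Prop :=
  0 < upd G w α v (prt M v) ∧ ∃ u, M (kf G w α M v) u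

lemma prt_prt (hM : IsMatching G M) {v : V} (h : ∃ u, M v u) : prt M (prt M v) = v := by
  have h1 := hM.symm _ _ (prt_spec h)
  exact hM.unique _ _ _ (prt_spec ⟨_, h1⟩) h1

lemma kf_not (hM : IsMatching G M) {v : V} (hv : ∃ u, M v u) (h : 0 < upd G w α v (prt M v)) :
    ¬ M v (kf G w α M v) := fun h' => (kf_spec v h).1 (hM.unique _ _ _ h' (prt_spec hv))

lemma kf_w (hw : GoodW G w) (hα : ValidMsg G α) (hfix : IsEpsFixedPt G w α ε)
    (hε : 0 < ε) {v : V} (h : 0 < upd G w α v (prt M v)) :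
    earn G w α v + earn G w α (kf G w α M v) - dfc G w α v (prt M v) - ε ≤ w v (kf G w α M v) := by
  obtain ⟨h1, h2, h3⟩ := kf_spec v h
  have := L2 hw hα hfix h2 hε (by rw [h3]; exact h)
  unfold dfc
  linarith

lemma step (hw : GoodW G w) (hα : ValidMsg G α) (hfix : IsEpsFixedPt G w α ε) (hM : IsMatching G M)
    (hε : 0 < ε) {v : V} (hv : ∃ u, M v u) (ha : alive G w α M v) :
    (∃ u, M (nx G w α M v) u) ∧ 
    dfc G w α (nx G w α M v) (prt M (nx G w α M v)) ≤ dfc G w α v (prt M v) + 4 * ε ∧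
    ∃ d, Dir G M d ∧ (∀ a, ∑ b, d a b = (if a = v then 1 else 0) - (if a = nx G w α M v then 1 else 0)) ∧
      earn G w α v - earn G w α (nx G w α M v) - (dfc G w α v (prt M v) + 3 * ε) ≤ LPval G w d ∧
      1 ≤ d v (kf G w α M v) := by
  obtain ⟨h1, h2, h3⟩ := kf_spec v ha.1
  have hn := kf_not hM hv ha.1
  have hww := kf_w hw hα hfix hε ha.1
  have hkk := prt_spec ha.2
  have hpp := prt_prt hM ha.2
  have hk := ha.2
  have hup := ha.1
  unfold nx
  set k := kf G w α M v with hkdef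
  set k' := prt M k with hk'
  rw [hpp]
  have hadj := hM.subset _ _ hkk
  have hc := dfc_cross hw hα hfix hM hε h2.symm (fun h => hn (hM.symm _ _ h)) hkk
  have hL3 := L3 hw hα hfix h2 hε (by rw [h3]; exact hup)
  refine ⟨⟨k, hM.symm _ _ hkk⟩, ?_, EE v k + (-EE k k'), (Dir_EE hM h2 hn).add (Dir_negEE hM hkk), ?_, ?_, ?_⟩
  · rw [h3] at hL3
    have : dfc G w α v (prt M v) = earn G w α v - upd G w α v (prt M v) := rfl
    linarith
  · intro a
    simp only [Pi.add_apply, Pi.neg_apply, Finset.sum_add_distrib, Finset.sum_neg_distrib]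
    rw [EE_row h2.ne, EE_row hadj.ne]; ring
  · rw [LPval_add, LPval_neg, LPval_EE hw h2, LPval_EE hw hadj]
    have := L1 hw hα hfix hadj hε
    linarith
  · have e := (Dir_negEE hM hkk).nonneg v k hn
    simp only [Pi.add_apply]
    rw [EE_self]; linarith

lemma walk (hw : GoodW G w) (hα : ValidMsg G α) (hfix : IsEpsFixedPt G w α ε) (hM : IsMatching G M)
    (hε : 0 < ε) {v : V} (hv : ∃ u, M v u) (L : ℕ) (ha : ∀ t < L, alive G w α M ((nx G w α M)^[t] v)) :
    (∃ u, M ((nx G w α M)^[L] v) u) ∧ 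
    dfc G w α ((nx G w α M)^[L] v) (prt M ((nx G w α M)^[L] v)) ≤ dfc G w α v (prt M v) + 4 * L * ε ∧
    ∃ d, Dir G M d ∧ (∀ a, ∑ b, d a b = (if a = v then 1 else 0) - (if a = (nx G w α M)^[L] v then 1 else 0)) ∧
      earn G w α v - earn G w α ((nx G w α M)^[L] v) - (L * dfc G w α v (prt M v) + (2 * L^2 + L) * ε) ≤ LPval G w d ∧
      (0 < L → 1 ≤ d v (kf G w α M v)) := by
  induction L with
  | zero =>
    refine ⟨hv, by simp, 0, Dir.zero, by intro a; simp only [Pi.zero_apply, Finset.sum_const_zero, Function.iterate_zero, id]; exact (sub_self _).symm, by simp [LPval_zero], by simp⟩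
  | succ L ih =>
    obtain ⟨i1, i2, d, i3, i4, i5, i6⟩ := ih fun t ht => ha t (by omega)
    obtain ⟨j1, j2, e, j3, j4, j5, j6⟩ := step hw hα hfix hM hε i1 (ha L (by omega))
    rw [Function.iterate_succ_apply']
    refine ⟨j1, ?_, d + e, i3.add j3, ?_, ?_, ?_⟩
    · push_cast; linarith
    · intro a
      simp only [Pi.add_apply, Finset.sum_add_distrib, i4, j4]; ring
    · rw [LPval_add]; push_cast; nlinarith
    · intro _
      simp only [Pi.add_apply]
      have hnot := kf_not hM hv (ha 0 (by omega)).1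
      rcases Nat.eq_zero_or_pos L with h | h
      · subst h
        have := i3.nonneg _ _ hnot
        simp only [Function.iterate_zero, id] at j6
        linarith
      · linarith [i6 h, j3.nonneg _ _ hnot]

lemma dfc_nonneg (hα : ValidMsg G α) (v p : V) : 0 ≤ dfc G w α v p := by
  unfold dfc; linarith [upd_le_earn (w := w) hα v p]

lemma outward (hw : GoodW G w) (hα : ValidMsg G α) (hfix : IsEpsFixedPt G w α ε) (hM : IsMatching G M)
    (hε : 0 < ε) {g : ℝ} (hg : 0 < g)
    (hgap : ∀ x : V → V → ℝ, LPFeasible G x → HalfIntegral x → x ≠ mInd M →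
      LPval G w x + g ≤ LPval G w (mInd M)) {v : V} (hv : ∃ u, M v u) {D n : ℝ}
    (hn : n = Fintype.card V)
    (hD : dfc G w α v (prt M v) ≤ D) (hK : n * D + (2 * n^2 + n) * ε < g) :
    ∃ d, Dir G M d ∧ (∀ a, (∃ u, M a u) → ∑ b, d a b ≤ (if a = v then 1 else 0)) ∧
      earn G w α v - (n * D + (2 * n^2 + n) * ε) ≤ LPval G w d := by
  have hdn := dfc_nonneg (w := w) hα v (prt M v)
  have hex : ∃ T, T < Fintype.card V ∧ ¬ alive G w α M ((nx G w α M)^[T] v) := by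
    by_contra hcon
    push Not at hcon
    obtain ⟨x, y, hne, hxy⟩ := Fintype.exists_ne_map_eq_of_card_lt
      (fun t : Fin (Fintype.card V + 1) => (nx G w α M)^[(t:ℕ)] v) (by simp)
    have : ∃ s L : ℕ, 0 < L ∧ s + L ≤ Fintype.card V ∧ (nx G w α M)^[s] v = (nx G w α M)^[s+L] v := by
      rcases lt_or_gt_of_ne (fun h => hne (Fin.ext h) : (x:ℕ) ≠ y) with h | h
      · refine ⟨x, y - x, by omega, by omega, ?_⟩
        rw [show (x:ℕ) + (y - x) = y by omega]; exact hxy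
      · refine ⟨y, x - y, by omega, by omega, ?_⟩
        rw [show (y:ℕ) + (x - y) = x by omega]; exact hxy.symm
    obtain ⟨s, L, hL, hsL, heq⟩ := this
    obtain ⟨i1, i2, -⟩ := walk hw hα hfix hM hε hv s fun t ht => hcon t (by omega)
    have hit : ∀ t, (nx G w α M)^[t] ((nx G w α M)^[s] v) = (nx G w α M)^[s+t] v := by
      intro t; rw [add_comm, Function.iterate_add_apply]
    obtain ⟨-, -, d, j3, j4, j5, j6⟩ := walk hw hα hfix hM hε i1 L fun t ht => by
      rw [hit]; exact hcon _ (by omega)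
    rw [hit, ← heq] at j4 j5
    have h6 := j6 hL
    have hb := dir_bound hM hg hgap j3 (fun i _ => by rw [j4]; simp)
       ((nx G w α M)^[s] v) (kf G w α M ((nx G w α M)^[s] v))
    have habs := le_abs_self (d ((nx G w α M)^[s] v) (kf G w α M ((nx G w α M)^[s] v)))
    have h7 : g ≤ g * |d ((nx G w α M)^[s] v) (kf G w α M ((nx G w α M)^[s] v))| := by nlinarith
    have hsL' : (s:ℝ) + L ≤ n := by rw [hn]; exact_mod_cast hsL
    have hs0 : (0:ℝ) ≤ s := Nat.cast_nonneg s
    have hL0 : (0:ℝ) ≤ L := Nat.cast_nonneg L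
    have h8 : (L:ℝ) * dfc G w α ((nx G w α M)^[s] v) (prt M ((nx G w α M)^[s] v)) ≤ L * (D + 4 * s * ε) :=
      mul_le_mul_of_nonneg_left (by linarith) hL0
    have h9 : (L:ℝ) * D ≤ n * D := mul_le_mul_of_nonneg_right (by linarith) (by linarith)
    have h10 : (4 * s * L + 2 * L^2 + L : ℝ) * ε ≤ (2 * n^2 + n) * ε := by
      apply mul_le_mul_of_nonneg_right _ hε.le
      nlinarith [mul_nonneg hs0 hL0]
    nlinarith
  classical
  obtain ⟨T, ⟨hT1, hT2⟩, hmin⟩ : ∃ T, (T < Fintype.card V ∧ ¬ alive G w α M ((nx G w α M)^[T] v)) ∧ 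
      ∀ t < T, ¬ (t < Fintype.card V ∧ ¬ alive G w α M ((nx G w α M)^[t] v)) :=
    ⟨Nat.find hex, Nat.find_spec hex, fun t ht => Nat.find_min hex ht⟩
  have hal : ∀ t < T, alive G w α M ((nx G w α M)^[t] v) := by
    intro t ht
    by_contra h
    exact hmin t ht ⟨by omega, h⟩
  obtain ⟨i1, i2, d, i3, i4, i5, -⟩ := walk hw hα hfix hM hε hv T hal
  set u := (nx G w α M)^[T] v with hu
  have hT' : (T:ℝ) + 1 ≤ n := by rw [hn]; exact_mod_cast hT1
  have hT0 : (0:ℝ) ≤ T := Nat.cast_nonneg T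
  have h8 : (T:ℝ) * dfc G w α v (prt M v) ≤ T * D :=
      mul_le_mul_of_nonneg_left (by linarith) hT0
  have h9 : ((T:ℝ)+1) * D ≤ n * D := mul_le_mul_of_nonneg_right (by linarith) (by linarith)
  have h10 : (2 * ((T:ℝ)+1)^2 + (T+1)) * ε ≤ (2 * n^2 + n) * ε := by
      apply mul_le_mul_of_nonneg_right _ hε.le
      nlinarith
  have un := upd_nonneg (w := w) hα u (prt M u)
  by_cases hup : 0 < upd G w α u (prt M u)
  · have hk : ¬ ∃ x, M (kf G w α M u) x := fun h => hT2 ⟨hup, h⟩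
    obtain ⟨h1, h2, h3⟩ := kf_spec u hup
    have hnm := kf_not hM i1 hup
    have hww := kf_w hw hα hfix hε hup
    refine ⟨d + EE u (kf G w α M u), i3.add (Dir_EE hM h2 hnm), ?_, ?_⟩
    · intro a hma
      simp only [Pi.add_apply, Finset.sum_add_distrib, i4]
      rw [EE_row h2.ne]
      have : a ≠ kf G w α M u := by rintro rfl; exact hk hma
      simp [this]
    · rw [LPval_add, LPval_EE hw h2]
      have := earn_nonneg (w := w) hα (kf G w α M u)
      nlinarith
  · have h0 : upd G w α u (prt M u) = 0 := le_antisymm (not_lt.1 hup) un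
    refine ⟨d, i3, ?_, ?_⟩
    · intro a _
      rw [i4]
      split_ifs <;> norm_num
    · have : dfc G w α u (prt M u) = earn G w α u := by unfold dfc; rw [h0]; ring
      nlinarith

lemma half_out (hw : GoodW G w) (hα : ValidMsg G α) (hfix : IsEpsFixedPt G w α ε) (hM : IsMatching G M)
    (hε : 0 < ε) {g : ℝ} (hg : 0 < g)
    (hgap : ∀ x : V → V → ℝ, LPFeasible G x → HalfIntegral x → x ≠ mInd M →
      LPval G w x + g ≤ LPval G w (mInd M)) {x j : V} (hxj : G.Adj x j) (hnm : ¬ M x j) {D n : ℝ}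
    (hn : n = Fintype.card V)
    (hD : earn G w α x - offer w α j x + 2 * ε ≤ D) (hK : n * D + (2 * n^2 + n) * ε < g) :
    ∃ d, Dir G M d ∧ (∀ a, (∃ u, M a u) → ∑ b, d a b ≤ - (if a = x then 1 else 0)) ∧
      - earn G w α x - (n * D + (2 * n^2 + n) * ε) - 2 * ε ≤ LPval G w d := by
  have hn0 : 0 ≤ n := by rw [hn]; exact Nat.cast_nonneg _
  have hD0 : 0 ≤ D := by linarith [offer_le_earn (w := w) (α := α) hxj]
  by_cases hx : ∃ u, M x u
  · obtain ⟨u, hu⟩ := hx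
    have hu' := hM.symm _ _ hu
    have hp : prt M u = x := hM.unique _ _ _ (prt_spec ⟨_, hu'⟩) hu'
    have hadj := hM.subset _ _ hu
    obtain ⟨d, d1, d2, d3⟩ := outward hw hα hfix hM hε hg hgap ⟨x, hu'⟩ hn (D := D)
      (by rw [hp]; exact (dfc_cross hw hα hfix hM hε hxj hnm hu).trans hD) hK
    refine ⟨d + (-EE x u), d1.add (Dir_negEE hM hu), ?_, ?_⟩
    · intro a ha
      simp only [Pi.add_apply, Pi.neg_apply, Finset.sum_add_distrib, Finset.sum_neg_distrib]
      rw [EE_row hadj.ne]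
      linarith [d2 a ha]
    · rw [LPval_add, LPval_neg, LPval_EE hw hadj]
      linarith [L1 hw hα hfix hadj hε]
  · refine ⟨0, Dir.zero, ?_, ?_⟩
    · intro a ha
      have : a ≠ x := by rintro rfl; exact hx ha
      simp [this]
    · rw [LPval_zero]
      have := earn_nonneg (w := w) hα x
      have : 0 ≤ n * D := mul_nonneg hn0 hD0
      have : 0 ≤ (2 * n^2 + n) * ε := by positivity
      linarith

end loc

/-! ### Global consequences -/

section glob
variable {G : SimpleGraph V} [DecidableRel G.Adj] {w : V → V → ℝ} {M : V → V → Prop}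
  {α : V → V → ℝ} {ε : ℝ}

lemma card_two {i j : V} (hij : G.Adj i j) : (2:ℝ) ≤ Fintype.card V := by
  have : 1 < Fintype.card V := Fintype.one_lt_card_iff.2 ⟨i, j, hij.ne⟩
  exact_mod_cast this

lemma gl1 (hw : GoodW G w) (hα : ValidMsg G α) (hfix : IsEpsFixedPt G w α ε) (hM : IsMatching G M)
    (hε : 0 < ε) {g : ℝ} (hg : 0 < g)
    (hgap : ∀ x : V → V → ℝ, LPFeasible G x → HalfIntegral x → x ≠ mInd M →
      LPval G w x + g ≤ LPval G w (mInd M))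
    (hbig : 10 * (Fintype.card V : ℝ)^2 * ε ≤ g) {i j : V} (hij : M i j) :
    α i j + α j i + 2 * ε < w i j := by
  by_contra hcon
  push Not at hcon
  have hadj := hM.subset _ _ hij
  have hn2 := card_two hadj
  obtain ⟨n, hn⟩ : ∃ n : ℝ, n = Fintype.card V := ⟨_, rfl⟩
  rw [← hn] at hn2 hbig
  have hB : 2 * ε ≤ n * ε := mul_le_mul_of_nonneg_right hn2 hε.le
  have hA : 2 * (n * ε) ≤ n^2 * ε := by nlinarith
  have hji := hM.symm _ _ hij
  have key : ∀ a b : V, M a b → α a b + α b a + 2 * ε ≥ w a b → dfc G w α a (prt M a) ≤ 2 * ε := by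
    intro a b hab hc
    have hp : prt M a = b := hM.unique _ _ _ (prt_spec ⟨_, hab⟩) hab
    rw [hp]
    have had := hM.subset _ _ hab
    have h1 := abs_le.1 (hfix a b had)
    have h2 := earn_le (w := w) hα a b
    have h3 := upd_nonneg (w := w) hα a b
    unfold dfc
    have : max (upd G w α a b) (offer w α b a) ≤ upd G w α a b + 2 * ε := by
      refine max_le (by linarith) ?_
      rcases offer_cases hw hα had with ⟨h, e1, e2⟩ | ⟨h, e1, e2⟩
      · linarith [h1.1, h1.2]
      · rcases max_cases (w a b - α b a) 0 with h4 | h4 <;> linarith [h4.1, h4.2, h1.1, h1.2]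
    linarith
  obtain ⟨d, d1, d2, d3⟩ := outward hw hα hfix hM hε hg hgap ⟨j, hij⟩ hn (key i j hij hcon) (by nlinarith)
  obtain ⟨e, e1, e2, e3⟩ := outward hw hα hfix hM hε hg hgap ⟨i, hji⟩ hn
    (key j i hji (by rw [hw.1 j i]; linarith)) (by nlinarith)
  have hb := dir_bound hM hg hgap ((d1.add e1).add (Dir_negEE hM hij)) (by
    intro a ha
    simp only [Pi.add_apply, Pi.neg_apply, Finset.sum_add_distrib, Finset.sum_neg_distrib]
    rw [EE_row hadj.ne]
    linarith [d2 a ha, e2 a ha]) i j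
  rw [LPval_add, LPval_add, LPval_neg, LPval_EE hw hadj] at hb
  have h1 : 1 ≤ |(d + e + -EE i j) i j| := by
    rw [abs_of_nonpos] <;> simp only [Pi.add_apply, Pi.neg_apply, EE_self] <;>
      linarith [d1.nonpos _ _ hij, e1.nonpos _ _ hij]
  have h2 := mul_le_mul_of_nonneg_left h1 hg.le
  have h3 := L1 hw hα hfix hadj hε
  nlinarith

lemma gl2 (hw : GoodW G w) (hα : ValidMsg G α) (hfix : IsEpsFixedPt G w α ε) (hM : IsMatching G M)
    (hε : 0 < ε) {g : ℝ} (hg : 0 < g)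
    (hgap : ∀ x : V → V → ℝ, LPFeasible G x → HalfIntegral x → x ≠ mInd M →
      LPval G w x + g ≤ LPval G w (mInd M))
    (hbig : 10 * (Fintype.card V : ℝ)^2 * ε ≤ g) {i : V} (hi : ∀ j, ¬ M i j) :
    earn G w α i = 0 := by
  by_contra hcon
  have hpos : 0 < earn G w α i := lt_of_le_of_ne (earn_nonneg hα i) (Ne.symm hcon)
  obtain ⟨k, hk, hke⟩ : ∃ k ∈ G.neighborFinset i, offer w α k i = earn G w α i := exists_fmax hpos
  have hadj : G.Adj i k := by simpa using hk
  have hn2 := card_two hadj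
  obtain ⟨n, hn⟩ : ∃ n : ℝ, n = Fintype.card V := ⟨_, rfl⟩
  rw [← hn] at hn2 hbig
  have hB : 2 * ε ≤ n * ε := mul_le_mul_of_nonneg_right hn2 hε.le
  have hA : 2 * (n * ε) ≤ n^2 * ε := by nlinarith
  have h2 := L2 hw hα hfix hadj hε (by rw [hke]; exact hpos)
  have h3 := L3 hw hα hfix hadj hε (by rw [hke]; exact hpos)
  have hnm : ¬ M k i := fun h => hi k (hM.symm _ _ h)
  obtain ⟨d, d1, d2, d3⟩ := half_out hw hα hfix hM hε hg hgap hadj.symm hnm hn (D := 4 * ε)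
    (by linarith) (by nlinarith)
  have hb := dir_bound hM hg hgap ((Dir_EE hM hadj (hi k)).add d1) (by
    intro a ha
    simp only [Pi.add_apply, Finset.sum_add_distrib]
    rw [EE_row hadj.ne]
    have : a ≠ i := by rintro rfl; exact ha.elim fun u hu => hi u hu
    rw [if_neg this]
    linarith [d2 a ha]) i k
  rw [LPval_add, LPval_EE hw hadj] at hb
  have h1 : 1 ≤ |(EE i k + d) i k| := by
    rw [abs_of_nonneg] <;> simp only [Pi.add_apply, EE_self] <;>
      linarith [d1.nonneg _ _ (hi k)]
  have h4 := mul_le_mul_of_nonneg_left h1 hg.le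
  nlinarith

lemma gl3 (hw : GoodW G w) (hα : ValidMsg G α) (hfix : IsEpsFixedPt G w α ε) (hM : IsMatching G M)
    (hε : 0 < ε) {g : ℝ} (hg : 0 < g)
    (hgap : ∀ x : V → V → ℝ, LPFeasible G x → HalfIntegral x → x ≠ mInd M →
      LPval G w x + g ≤ LPval G w (mInd M))
    (hbig : 10 * (Fintype.card V : ℝ)^2 * ε ≤ g) {i j : V} (hadj : G.Adj i j) (hnm : ¬ M i j) :
    w i j ≤ earn G w α i + earn G w α j := by
  by_contra hcon
  push Not at hcon
  have hn2 := card_two hadj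
  obtain ⟨n, hn⟩ : ∃ n : ℝ, n = Fintype.card V := ⟨_, rfl⟩
  rw [← hn] at hn2 hbig
  have hB : 2 * ε ≤ n * ε := mul_le_mul_of_nonneg_right hn2 hε.le
  have hA : 2 * (n * ε) ≤ n^2 * ε := by nlinarith
  have c1 := offer_le_earn (w := w) (α := α) hadj
  have c2 := offer_le_earn (w := w) (α := α) hadj.symm
  have f1 := (abs_le.1 (hfix i j hadj)).2
  have f2 := (abs_le.1 (hfix j i hadj.symm)).2
  have u1 := upd_le_earn (w := w) hα i j
  have u2 := upd_le_earn (w := w) hα j i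
  have hoff : earn G w α i - offer w α j i ≤ ε ∧ earn G w α j - offer w α i j ≤ ε := by
    rcases offer_cases hw hα hadj with ⟨h, e1, e2⟩ | ⟨h, e1, e2⟩
    · exfalso; linarith
    · have := le_max_left (w i j - α j i) 0
      have := le_max_left (w i j - α i j) 0
      constructor <;> linarith
  have hnm' : ¬ M j i := fun h => hnm (hM.symm _ _ h)
  obtain ⟨d, d1, d2, d3⟩ := half_out hw hα hfix hM hε hg hgap hadj hnm hn (D := 3 * ε)
    (by linarith [hoff.1]) (by nlinarith)
  obtain ⟨e, e1, e2, e3⟩ := half_out hw hα hfix hM hε hg hgap hadj.symm hnm' hn (D := 3 * ε)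
    (by linarith [hoff.2]) (by nlinarith)
  have hb := dir_bound hM hg hgap (((Dir_EE hM hadj hnm).add d1).add e1) (by
    intro a ha
    simp only [Pi.add_apply, Finset.sum_add_distrib]
    rw [EE_row hadj.ne]
    linarith [d2 a ha, e2 a ha]) i j
  rw [LPval_add, LPval_add, LPval_EE hw hadj] at hb
  have h1 : 1 ≤ |(EE i j + d + e) i j| := by
    rw [abs_of_nonneg] <;> simp only [Pi.add_apply, EE_self] <;>
      linarith [d1.nonneg _ _ hnm, e1.nonneg _ _ hnm]
  have h4 := mul_le_mul_of_nonneg_left h1 hg.le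
  nlinarith

lemma final (hw : GoodW G w) (hα : ValidMsg G α) (hfix : IsEpsFixedPt G w α ε) (hM : IsMatching G M)
    (hε : 0 < ε) {g : ℝ} (hg : 0 < g)
    (hgap : ∀ x : V → V → ℝ, LPFeasible G x → HalfIntegral x → x ≠ mInd M →
      LPval G w x + g ≤ LPval G w (mInd M))
    (hbig : 10 * (Fintype.card V : ℝ)^2 * ε ≤ g) :
    Induces G (offer w α) M ∧ IsEpsNB G w M (earn G w α) (6 * ε) := by
  have hst : Stable G w M (earn G w α) := fun i j h1 h2 => gl3 hw hα hfix hM hε hg hgap hbig h1 h2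
  have hun : ∀ i, (∀ j, ¬ M i j) → earn G w α i = 0 := fun i hi => gl2 hw hα hfix hM hε hg hgap hbig hi
  have hmat : ∀ i j, M i j → offer w α j i = α i j + (w i j - α i j - α j i) / 2 ∧
      upd G w α i j < offer w α j i ∧ earn G w α i = offer w α j i := by
    intro i j hij
    have h1 := gl1 hw hα hfix hM hε hg hgap hbig hij
    have hadj := hM.subset _ _ hij
    have f := (abs_le.1 (hfix i j hadj)).1
    have h2 : offer w α j i = α i j + (w i j - α i j - α j i) / 2 := by
      rcases offer_cases hw hα hadj with ⟨h, e1, e2⟩ | ⟨h, e1, e2⟩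
      · exact e1
      · linarith
    have h3 : upd G w α i j < offer w α j i := by linarith
    refine ⟨h2, h3, le_antisymm ?_ (offer_le_earn hadj)⟩
    exact (earn_le hα i j).trans (max_le h3.le le_rfl)
  have hsum : ∀ i j, M i j → earn G w α i + earn G w α j = w i j := by
    intro i j hij
    have a := hmat i j hij
    have b := hmat j i (hM.symm _ _ hij)
    rw [a.2.2, b.2.2, a.1, b.1, hw.1 j i]; ring
  -- earnings agree with the update off the matching
  have hoffm : ∀ k i, G.Adj k i → ¬ M k i → earn G w α k = upd G w α k i := by
    intro k i hki hn
    refine le_antisymm ?_ (upd_le_earn hα k i)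
    by_cases hk : ∃ l, M k l
    · obtain ⟨l, hl⟩ := hk
      rw [(hmat k l hl).2.2]
      exact offer_le_upd (hM.subset _ _ hl) (by rintro rfl; exact hn hl)
    · push Not at hk
      rw [hun k hk]; exact upd_nonneg hα k i
  have halt : ∀ i j, M i j → |upd G w α i j - bestAlt G w (earn G w α) i j| ≤ ε := by
    intro i j hij
    unfold upd bestAlt
    apply fmax_lip hε.le
    · intro k hk
      simp at hk
      exact offer_nonneg (hα _ _ hk.2)
    · intro k _
      exact le_max_right _ _
    intro k hk
    simp at hk
    have hnm : ¬ M i k := fun h => hk.1 (hM.unique _ _ _ h hij)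
    have hnm' : ¬ M k i := fun h => hnm (hM.symm _ _ h)
    have s := hst i k hk.2 hnm
    have o1 := hoffm i k hk.2 hnm
    have o2 := hoffm k i hk.2.symm hnm'
    have f1 := abs_le.1 (hfix i k hk.2)
    have f2 := abs_le.1 (hfix k i hk.2.symm)
    have p1 := hα i k hk.2
    have p2 := hα k i hk.2.symm
    unfold pos
    rw [abs_le]
    rcases offer_cases hw hα hk.2 with ⟨h, e1, e2⟩ | ⟨h, e1, e2⟩
    · rw [e1]
      rcases max_cases (w i k - earn G w α k) 0 with h4 | h4 <;> constructor <;>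
        linarith [h4.1, h4.2, f1.1, f1.2, f2.1, f2.2]
    · rw [e1]
      rcases max_cases (w i k - earn G w α k) 0 with h4 | h4 <;>
      rcases max_cases (w i k - α k i) 0 with h5 | h5 <;> constructor <;>
        linarith [h4.1, h4.2, f1.1, f1.2, f2.1, f2.2, h5.1, h5.2]
  refine ⟨⟨hM, ?_, ?_⟩, ⟨hM, earn_nonneg hα, hsum, hun⟩, hst, ?_⟩
  · rintro i ⟨k, hk, hp⟩
    by_cases hi : ∃ j, M i j
    · obtain ⟨j, hj⟩ := hi
      refine ⟨j, hj, fun l hl hne => ?_⟩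
      exact (offer_le_upd hl hne).trans_lt (hmat i j hj).2.1
    · push Not at hi
      have := hun i hi
      have := offer_le_earn (w := w) (α := α) hk
      linarith
  · intro i hi j hj
    have h1 := hmat i j hj
    have h2 := upd_nonneg (w := w) hα i j
    have h3 : earn G w α i = 0 := hi
    linarith [h1.2.1, h1.2.2]
  · intro i j hij
    have hji := hM.symm _ _ hij
    have a := hmat i j hij
    have b := hmat j i hji
    have e1 := abs_le.1 (halt i j hij)
    have e2 := abs_le.1 (halt j i hji)
    have f1 := abs_le.1 (hfix i j (hM.subset _ _ hij))
    have f2 := abs_le.1 (hfix j i (hM.subset _ _ hji))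
    have hs := hw.1 j i
    have a1 := a.1
    have a2 := a.2.2
    have b1 := b.1
    have b2 := b.2.2
    rw [abs_le]
    constructor <;> linarith [e1.1, e1.2, e2.1, e2.2, f1.1, f1.2, f2.1, f2.2]

end glob

/-- (Corollary of fast convergence.) With weights in `[0,1]`, a
unique integral LP optimum corresponding to `M*` and LP gap `g > 0`, for every
initial condition in `[0,1]^{2|E|}` and every `t ≥ T* = 100 n⁴/(π κ(1−κ) g²)`, the
iterate `α^t` induces `M*` and `(γ^t, M*)` is a `(6/√(π κ(1−κ) t))`-NB solution. -/
theorem induces_and_epsNB_after_Tstar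
    {V : Type*} [Fintype V] [DecidableEq V] (G : SimpleGraph V) [DecidableRel G.Adj]
    (w : V → V → ℝ) (hw : GoodW G w) (hw1 : ∀ i j, G.Adj i j → w i j ≤ 1)
    (Mstar : V → V → Prop) (hM : IsMatching G Mstar)
    (hopt : LPOptimal G w (mInd Mstar))
    (huniq : ∀ x, LPOptimal G w x → x = mInd Mstar)
    (g : ℝ) (hg : 0 < g)
    (hgap : ∀ x : V → V → ℝ, LPFeasible G x → HalfIntegral x → x ≠ mInd Mstar →
      LPval G w x + g ≤ LPval G w (mInd Mstar))
    (κ : ℝ) (hκ : κ ∈ Set.Ioo (0 : ℝ) 1)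
    (α0 : V → V → ℝ) (hα0 : ∀ i j, G.Adj i j → α0 i j ∈ Set.Icc (0 : ℝ) 1) :
    ∀ t : ℕ,
      100 * (Fintype.card V : ℝ) ^ 4 / (Real.pi * κ * (1 - κ) * g ^ 2) ≤ t →
      Induces G (offer w (dyn G w κ α0 t)) Mstar ∧
        IsEpsNB G w Mstar (earn G w (dyn G w κ α0 t))
          (6 / Real.sqrt (Real.pi * κ * (1 - κ) * t)) := by
  intro t ht
  rcases isEmpty_or_nonempty V with hV | hV
  · refine ⟨⟨hM, fun i => isEmptyElim i, fun i => isEmptyElim i⟩,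
      ⟨hM, fun i => isEmptyElim i, fun i => isEmptyElim i, fun i => isEmptyElim i⟩,
      fun i => isEmptyElim i, fun i => isEmptyElim i⟩
  have hcard : (0:ℝ) < Fintype.card V := by exact_mod_cast Fintype.card_pos
  have hκ0 := hκ.1
  have hκ1 : 0 < 1 - κ := sub_pos.2 hκ.2
  have hp : 0 < Real.pi * κ * (1 - κ) := by have := Real.pi_pos; positivity
  have ht0 : (0:ℝ) < t := lt_of_lt_of_le (by positivity) ht
  have htn : 0 < t := by exact_mod_cast ht0
  have hq : 0 < Real.pi * κ * (1 - κ) * t := mul_pos hp ht0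
  have hs : 0 < Real.sqrt (Real.pi * κ * (1 - κ) * t) := Real.sqrt_pos.2 hq
  have hα : ValidMsg G (dyn G w κ α0 t) := fun i j h => (dyn_mem hw hw1 hκ hα0 t i j h).1
  have hfix := dyn_fix hw hw1 hκ hα0 t htn
  have hbig : 10 * (Fintype.card V : ℝ)^2 * (1 / Real.sqrt (Real.pi * κ * (1 - κ) * t)) ≤ g := by
    rw [mul_one_div, div_le_iff₀ hs]
    refine (sq_le_sq₀ (by positivity) (by positivity)).1 ?_
    rw [mul_pow g, Real.sq_sqrt hq.le]
    rw [div_le_iff₀ (by positivity)] at ht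
    nlinarith
  have := final hw hα hfix hM (by positivity) hg hgap hbig
  rw [mul_one_div] at this
  exact this

end EN
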